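/- For every n ≥ 0 and every gamble f on Ω that is n-measurable, the Williams and Ville–Vovk–Shafer natural extensions coincide: E_V(f) = E_W(f). -/

import Mathlib

/-!
Both natural extensions are suprema of sets of reals, and these two sets are in fact equal.

A Williams witness `(N, S)` becomes a Ville–Vovk–Shafer witness by stopping `S` at time `N`: the
stopped selection is still almost-desirable because `E(0|s) = 0`, and its process is constant from
time `N` on, so its limsup is `F^S_N`.

Conversely, coherence forces an almost-desirable `S(s)` to be nonnegative in at least one state
(`exists_nonneg`). From any situation `ω_n` one can therefore follow a path along which `F^S` never
decreases (`exists_path`), so that `F^S(ω_n)` is at most the limsup along that path. As `f` is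
`n`-measurable, it takes the same value on that path as on `ω`; hence `(n, S)` is a Williams witness
for the same `α`.
-/


open Filter

/-- The length-`n` initial segment `ω_n` of a path `ω`. -/
def seg {X : Type} (ω : ℕ → X) (n : ℕ) : List X :=
  List.ofFn (fun i : Fin n => ω i)

/-- The cylinder set of a situation `s`: all paths having `s` as initial segment. -/
def cyl {X : Type} (s : List X) : Set (ℕ → X) :=
  {ω | seg ω s.length = s}

/-- A gamble `f` on paths is `n`-measurable if it only depends on the first `n` states. -/
def Meas {X : Type} (n : ℕ) (f : (ℕ → X) → ℝ) : Prop :=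
  ∀ ω ω' : ℕ → X, seg ω n = seg ω' n → f ω = f ω'

/-- A local model assigns to every situation a superadditive, positively homogeneous
functional on gambles on `X` that dominates the minimum. -/
def IsLocalModel {X : Type} [Fintype X] [Nonempty X]
    (E : List X → (X → ℝ) → ℝ) : Prop :=
  (∀ (s : List X) (f g : X → ℝ), E s f + E s g ≤ E s (f + g)) ∧
  (∀ (s : List X) (c : ℝ) (f : X → ℝ), 0 ≤ c → E s (c • f) = c * E s f) ∧
  (∀ (s : List X) (f : X → ℝ), (⨅ x, f x) ≤ E s f)

/-- The real process `F^S` associated with a selection `S`: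
`F^S(x₁…xₙ) = ∑_{i=1}^n S(x₁…x_{i-1})(x_i)`. -/
noncomputable def procF {X : Type} (S : List X → X → ℝ) (s : List X) : ℝ :=
  ∑ i : Fin s.length, S (s.take i.1) (s.get i)

/-- `limsup F^S`, as a gamble on paths (valued in the extended reals). -/
noncomputable def limsupF {X : Type} (S : List X → X → ℝ) (ω : ℕ → X) : EReal :=
  Filter.limsup (fun n => ((procF S (seg ω n) : ℝ) : EReal)) Filter.atTop

/-- A selection is almost-desirable (w.r.t. the local model `E`) if `E(S(s)|s) ≥ 0`
for every situation `s`. -/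
def AlmostDesirable {X : Type} (E : List X → (X → ℝ) → ℝ)
    (S : List X → X → ℝ) : Prop :=
  ∀ s : List X, 0 ≤ E s (S s)

/-- The Williams natural extension `E_W(f)`. -/
noncomputable def EW {X : Type} (E : List X → (X → ℝ) → ℝ)
    (f : (ℕ → X) → ℝ) : EReal :=
  sSup {a : EReal | ∃ α : ℝ, a = (α : EReal) ∧
    ∃ (n : ℕ) (S : List X → X → ℝ), AlmostDesirable E S ∧
      ∀ ω : ℕ → X, procF S (seg ω n) ≤ f ω - α}

/-- The Ville–Vovk–Shafer natural extension `E_V(f)`. -/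
noncomputable def EV {X : Type} (E : List X → (X → ℝ) → ℝ)
    (f : (ℕ → X) → ℝ) : EReal :=
  sSup {a : EReal | ∃ α : ℝ, a = (α : EReal) ∧
    ∃ S : List X → X → ℝ, AlmostDesirable E S ∧
      ∀ ω : ℕ → X, limsupF S ω ≤ ((f ω - α : ℝ) : EReal)}

lemma seg_succ {X : Type} (ω : ℕ → X) (n : ℕ) : seg ω (n + 1) = seg ω n ++ [ω n] := by
  unfold seg
  rw [List.ofFn_succ_last]
  rfl

lemma length_seg {X : Type} (ω : ℕ → X) (n : ℕ) : (seg ω n).length = n := by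
  simp [seg]

lemma procF_append {X : Type} (S : List X → X → ℝ) (s : List X) (x : X) :
    procF S (s ++ [x]) = procF S s + S s x := by
  have h : (s ++ [x]).length = s.length + 1 := by simp
  unfold procF
  rw [Fintype.sum_equiv (finCongr h)
    (fun i : Fin (s ++ [x]).length => S ((s ++ [x]).take i.1) ((s ++ [x]).get i))
    (fun i : Fin (s.length + 1) => S ((s ++ [x]).take i.1) ((s ++ [x]).get (Fin.cast h.symm i)))
    (fun i => rfl), Fin.sum_univ_castSucc]
  congr 1
  · refine Finset.sum_congr rfl fun i _ => ?_
    have hi := i.2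
    simp [List.take_append_of_le_length hi.le, List.getElem_append_left hi]
  · simp

lemma procF_seg_succ {X : Type} (S : List X → X → ℝ) (ω : ℕ → X) (n : ℕ) :
    procF S (seg ω (n + 1)) = procF S (seg ω n) + S (seg ω n) (ω n) := by
  rw [seg_succ, procF_append]

lemma localModel_zero {X : Type} [Fintype X] [Nonempty X] {E : List X → (X → ℝ) → ℝ}
    (hE : IsLocalModel E) (s : List X) : E s 0 = 0 := by
  simpa using hE.2.1 s 0 0 le_rfl

lemma exists_nonneg {X : Type} [Fintype X] [Nonempty X] {E : List X → (X → ℝ) → ℝ}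
    (hE : IsLocalModel E) {S : List X → X → ℝ} (hS : AlmostDesirable E S) (s : List X) :
    ∃ x, 0 ≤ S s x := by
  by_contra! h
  -- If `S s < 0` everywhere, then `E (-S s) ≥ min (-S s) > 0`, against `E (S s) + E (-S s) ≤ 0`.
  have h1 := hE.1 s (S s) (-S s)
  rw [add_neg_cancel, localModel_zero hE] at h1
  have h2 := hE.2.2 s (-S s)
  obtain ⟨x, hx⟩ := exists_eq_ciInf_of_finite (f := (-S s))
  have h3 := h x
  have h4 := hS s
  rw [← hx, Pi.neg_apply] at h2
  linarith

/-- Every initial segment `ω_n` extends to a path along which `F^S` never drops below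
`F^S(ω_n)`. -/
lemma exists_path {X : Type} [Fintype X] [Nonempty X] {E : List X → (X → ℝ) → ℝ}
    (hE : IsLocalModel E) {S : List X → X → ℝ} (hS : AlmostDesirable E S)
    (ω : ℕ → X) (n : ℕ) :
    ∃ ω' : ℕ → X, seg ω' n = seg ω n ∧
      ∀ m, n ≤ m → procF S (seg ω n) ≤ procF S (seg ω' m) := by
  choose next hnext using exists_nonneg hE hS
  -- `T k` is the length-`k` segment of the path: it copies `ω` before time `n` and then always
  -- moves to a state in which `S` is nonnegative.
  let T : ℕ → List X := fun k =>
    Nat.rec [] (fun j t => t ++ [if j < n then ω j else next t]) k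
  let ω' : ℕ → X := fun k => if k < n then ω k else next (T k)
  have hT : ∀ k, seg ω' k = T k := by
    intro k
    induction k with
    | zero => simp [seg, T]
    | succ k ih => rw [seg_succ, ih]
  have hn : seg ω' n = seg ω n := by
    unfold seg
    congr 1
    funext i
    simp [ω']
  refine ⟨ω', hn, fun m hm => ?_⟩
  induction m, hm using Nat.le_induction with
  | base => rw [hn]
  | succ m hm ih =>
    rw [procF_seg_succ]
    have h : ω' m = next (seg ω' m) := by
      rw [hT]
      simp [ω', hm]
    rw [h]
    linarith [hnext (seg ω' m)]

lemma le_limsupF {X : Type} (S : List X → X → ℝ) (ω : ℕ → X) (n : ℕ) (c : ℝ)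
    (h : ∀ m, n ≤ m → c ≤ procF S (seg ω m)) : (c : EReal) ≤ limsupF S ω := by
  refine le_limsup_of_frequently_le (Eventually.frequently ?_)
  filter_upwards [eventually_ge_atTop n] with m hm
  exact_mod_cast h m hm

/-- The selection `S` stopped at time `N`: it equals `S` in situations shorter than `N` and is zero
afterwards. -/
noncomputable def stopSel {X : Type} (S : List X → X → ℝ) (N : ℕ) : List X → X → ℝ :=
  fun s => if s.length < N then S s else 0

lemma procF_stopSel_of_le {X : Type} (S : List X → X → ℝ) (N : ℕ) (ω : ℕ → X) (m : ℕ)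
    (hm : m ≤ N) : procF (stopSel S N) (seg ω m) = procF S (seg ω m) := by
  induction m with
  | zero =>
    unfold seg procF
    rfl
  | succ m ih =>
    have h : m < N := hm
    rw [procF_seg_succ, procF_seg_succ, ih h.le]
    simp [stopSel, length_seg, h]

lemma procF_stopSel_of_ge {X : Type} (S : List X → X → ℝ) (N : ℕ) (ω : ℕ → X) (m : ℕ)
    (hm : N ≤ m) : procF (stopSel S N) (seg ω m) = procF S (seg ω N) := by
  induction m, hm using Nat.le_induction with
  | base => exact procF_stopSel_of_le S N ω N le_rfl
  | succ m hm ih =>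
    rw [procF_seg_succ, ih]
    simp [stopSel, length_seg, hm.not_gt]

lemma limsupF_stopSel {X : Type} (S : List X → X → ℝ) (N : ℕ) (ω : ℕ → X) :
    limsupF (stopSel S N) ω = ((procF S (seg ω N) : ℝ) : EReal) := by
  refine Tendsto.limsup_eq (tendsto_const_nhds.congr' ?_)
  filter_upwards [eventually_ge_atTop N] with m hm
  rw [procF_stopSel_of_ge S N ω m hm]

/-- on `n`-measurable gambles the two natural extensions coincide. -/
theorem ville_eq_williams_of_meas {X : Type} [Fintype X] [Nonempty X]
    (E : List X → (X → ℝ) → ℝ) (hE : IsLocalModel E)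
    (n : ℕ) (f : (ℕ → X) → ℝ) (hf : Meas n f) :
    EV E f = EW E f := by
  refine le_antisymm (sSup_le_sSup ?_) (sSup_le_sSup ?_)
  · rintro _ ⟨α, rfl, S, hS, hle⟩
    refine ⟨α, rfl, n, S, hS, fun ω => ?_⟩
    obtain ⟨ω', hseg, hmono⟩ := exists_path hE hS ω n
    have h := (le_limsupF S ω' n _ hmono).trans (hle ω')
    rw [hf ω' ω hseg] at h
    exact_mod_cast h
  · rintro _ ⟨α, rfl, N, S, hS, hle⟩
    refine ⟨α, rfl, stopSel S N, fun s => ?_, fun ω => ?_⟩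
    · unfold stopSel
      split_ifs
      · exact hS s
      · exact (localModel_zero hE s).ge
    · rw [limsupF_stopSel]
      exact_mod_cast hle ω
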